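/- Let α > 3 and set γ = 2α/(α−3) (so that 3/α + 2/γ = 1). There is a constant C = C(α) such that for every pair of smooth Schwartz-class vector fields u, b : ℝ³ → ℝ³, the term I₂ = ∫_{ℝ³} (b_z · ∇b) · u_z dx dy dz satisfies |I₂| ≤ (1/4) ‖∇b_z‖₂² + C (‖∇b‖₂² + ‖u_z‖_α^γ) ‖b_z‖₂^{(2α−6)/(2α−3)}. -/

import Mathlib

/-!
Pointwise, `|(b_z · ∇b) · u_z| ≤ |∇b| |u_z| |b_z|`. Hölder's inequality together with the
interpolation of `b_z` between `L²` and `L⁶` (`holder_step`) bounds the integral by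
`‖∇b‖₂ ‖u_z‖_α ‖b_z‖₂^{1-3/α} ‖b_z‖₆^{3/α}`, the Sobolev inequality `‖b_z‖₆ ≤ K ‖∇b_z‖₂`
(`sobolev_six`) replaces the last factor, and Young's inequality (`young_step`) absorbs
`‖∇b_z‖₂^{3/α}` into `(1/4) ‖∇b_z‖₂²` and separates `‖∇b‖₂` from `‖u_z‖_α`. All norms involved
are finite because the fields are Schwartz.
-/

open MeasureTheory

noncomputable section

/-- Three-dimensional Euclidean space. -/
abbrev E3 : Type := EuclideanSpace ℝ (Fin 3)

/-- The `i`-th standard basis vector of `ℝ³`. -/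
def ee (i : Fin 3) : E3 := EuclideanSpace.single i 1

/-- The partial derivative of a scalar function in the `i`-th coordinate direction. -/
def pd (i : Fin 3) (f : E3 → ℝ) : E3 → ℝ := fun x => fderiv ℝ f x (ee i)

/-- The partial derivative of a vector field in the `i`-th coordinate direction. -/
def pdv (i : Fin 3) (u : E3 → E3) : E3 → E3 := fun x => fderiv ℝ u x (ee i)

/-- The `Lʳ(ℝ³)` norm of a scalar function. -/
def Lnorm (r : ℝ) (f : E3 → ℝ) : ℝ := (eLpNorm f (ENNReal.ofReal r) volume).toReal

/-- The `Lʳ(ℝ³)` norm of a vector field (with the pointwise Euclidean norm). -/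
def LnormV (r : ℝ) (u : E3 → E3) : ℝ := (eLpNorm u (ENNReal.ofReal r) volume).toReal

/-- The pointwise (Frobenius) norm of the full gradient matrix of a vector field. -/
def gradNormAt (u : E3 → E3) (x : E3) : ℝ :=
  Real.sqrt (∑ i, ∑ j, (fderiv ℝ u x (ee j) i) ^ 2)

/-- The squared pointwise Frobenius norm `|∇u|²` of the gradient of a vector field. -/
def frobSq (u : E3 → E3) (x : E3) : ℝ := ∑ i, ∑ j, (fderiv ℝ u x (ee j) i) ^ 2

/-- The `Lʳ` norm of the full gradient of a vector field. -/
def LnormGrad (r : ℝ) (u : E3 → E3) : ℝ := Lnorm r (gradNormAt u)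

/-- The `i`-th component of the (componentwise) Laplacian of a vector field. -/
def lapC (u : E3 → E3) (x : E3) (i : Fin 3) : ℝ :=
  ∑ j, fderiv ℝ (fun y => fderiv ℝ u y (ee j) i) x (ee j)

/-- The pointwise Euclidean norm `|Δu|` of the Laplacian of a vector field. -/
def lapNormAt (u : E3 → E3) (x : E3) : ℝ := Real.sqrt (∑ i, (lapC u x i) ^ 2)

/-- The Laplacian of a scalar function. -/
def lapR (f : E3 → ℝ) (x : E3) : ℝ :=
  ∑ j, fderiv ℝ (fun y => fderiv ℝ f y (ee j)) x (ee j)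

/-- The pointwise norm `|∇|w|²|` of the gradient of the squared modulus of a vector field. -/
def gradOfSqNormAt (w : E3 → E3) (x : E3) : ℝ :=
  Real.sqrt (∑ j, (pd j (fun y => ‖w y‖ ^ 2) x) ^ 2)

/-- A vector field is divergence free. -/
def DivFree (u : E3 → E3) : Prop := ∀ x, ∑ i, fderiv ℝ u x (ee i) i = 0

/-- A vector field is (the coercion of) a Schwartz map. -/
def SchwartzClassV (f : E3 → E3) : Prop := ∃ g : SchwartzMap E3 E3, ⇑g = f

/-- A scalar function is (the coercion of) a Schwartz map. -/
def SchwartzClassR (f : E3 → ℝ) : Prop := ∃ g : SchwartzMap E3 ℝ, ⇑g = f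

/-- The `H¹` norm of a vector field: `L²` norm plus `L²` norm of the gradient. -/
def H1norm (f : E3 → E3) : ℝ := LnormV 2 f + LnormGrad 2 f

/-- `(u, b, p)` is a smooth, spatially Schwartz-class solution of the 3D incompressible
MHD equations with unit viscosity and magnetic diffusivity for times in the set `S`:
`uₜ + (u·∇)u = Δu − ∇p + (b·∇)b`, `bₜ + (u·∇)b = Δb + (b·∇)u`, `∇·u = 0`, `∇·b = 0`. -/
structure MHDSolution (S : Set ℝ) (u b : ℝ → E3 → E3) (p : ℝ → E3 → ℝ) : Prop where
  smooth_u : ContDiffOn ℝ (⊤ : ℕ∞) (fun q : ℝ × E3 => u q.1 q.2) (S ×ˢ Set.univ)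
  smooth_b : ContDiffOn ℝ (⊤ : ℕ∞) (fun q : ℝ × E3 => b q.1 q.2) (S ×ˢ Set.univ)
  smooth_p : ContDiffOn ℝ (⊤ : ℕ∞) (fun q : ℝ × E3 => p q.1 q.2) (S ×ˢ Set.univ)
  schwartz_u : ∀ t ∈ S, SchwartzClassV (u t)
  schwartz_b : ∀ t ∈ S, SchwartzClassV (b t)
  schwartz_p : ∀ t ∈ S, SchwartzClassR (p t)
  div_u : ∀ t ∈ S, DivFree (u t)
  div_b : ∀ t ∈ S, DivFree (b t)
  eq_u : ∀ t ∈ S, ∀ x : E3, ∀ i : Fin 3,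
    deriv (fun s => u s x i) t + ∑ j, u t x j * fderiv ℝ (u t) x (ee j) i
      = lapC (u t) x i - pd i (p t) x + ∑ j, b t x j * fderiv ℝ (b t) x (ee j) i
  eq_b : ∀ t ∈ S, ∀ x : E3, ∀ i : Fin 3,
    deriv (fun s => b s x i) t + ∑ j, u t x j * fderiv ℝ (b t) x (ee j) i
      = lapC (b t) x i + ∑ j, b t x j * fderiv ℝ (u t) x (ee j) i

/-! ### Young's inequality -/

/-- The two applications of the weighted arithmetic-geometric mean inequality. With
`θ = 3 / (2α)` the first splits off `(G ^ 2 / 4) ^ θ`; with `w = α / (2α - 3)` the second separates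
`A` from `U`. -/
lemma young_step (α : ℝ) (hα : 3 < α) {K A U Z G : ℝ} (hK : 0 ≤ K) (hA : 0 ≤ A) (hU : 0 ≤ U)
    (hZ : 0 ≤ Z) (hG : 0 ≤ G) :
    A * U * Z ^ (1 - 3 / α) * (K * G) ^ (3 / α) ≤
      (1 / 4) * G ^ 2 + (4 * K ^ 2) ^ (3 / (2 * α - 3)) * (A ^ 2 + U ^ (2 * α / (α - 3)))
        * Z ^ ((2 * α - 6) / (2 * α - 3)) := by
  have h0 : α ≠ 0 := by linarith
  have h1 : 2 * α - 3 ≠ 0 := by linarith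
  have h2 : α - 3 ≠ 0 := by linarith
  have p0 : 0 < α := by linarith
  have p1 : 0 < 2 * α - 3 := by linarith
  have p2 : 0 < α - 3 := by linarith
  have hw : (A ^ 2) ^ (α / (2 * α - 3)) * (U ^ (2 * α / (α - 3))) ^ ((α - 3) / (2 * α - 3))
      ≤ A ^ 2 + U ^ (2 * α / (α - 3)) := by
    have hU' : 0 ≤ U ^ (2 * α / (α - 3)) := by positivity
    have := Real.geom_mean_le_arith_mean2_weighted (w₁ := α / (2 * α - 3))
      (w₂ := (α - 3) / (2 * α - 3)) (by positivity) (by positivity) (sq_nonneg A) hU'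
      (by rw [← add_div, div_eq_one_iff_eq h1]; ring)
    have l1 : α / (2 * α - 3) ≤ 1 := by rw [div_le_one p1]; linarith
    have l2 : (α - 3) / (2 * α - 3) ≤ 1 := by rw [div_le_one p1]; linarith
    nlinarith [mul_le_mul_of_nonneg_right l1 (sq_nonneg A), mul_le_mul_of_nonneg_right l2 hU']
  set y : ℝ := (4 * K ^ 2) ^ (3 / (2 * α - 3)) *
    ((A ^ 2) ^ (α / (2 * α - 3)) * (U ^ (2 * α / (α - 3))) ^ ((α - 3) / (2 * α - 3)))
        * Z ^ ((2 * α - 6) / (2 * α - 3)) with hy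
  have p3 : 0 ≤ 2 * α - 6 := by linarith
  have hy0 : 0 ≤ y := by positivity
  have q1 : 0 ≤ 3 / (2 * α) := by positivity
  have q2 : 0 ≤ (2 * α - 3) / (2 * α) := by positivity
  have hm := Real.geom_mean_le_arith_mean2_weighted (w₁ := 3 / (2 * α))
      (w₂ := (2 * α - 3) / (2 * α)) q1 q2
      (show 0 ≤ G ^ 2 / 4 by positivity) hy0 (by field_simp; ring)
  have hyp : y ^ ((2 * α - 3) / (2 * α)) =
      (4 * K ^ 2) ^ (3 / (2 * α)) * (A * U) * Z ^ (1 - 3 / α) := by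
    have hK4 : 0 ≤ 4 * K ^ 2 := by positivity
    rw [hy]
    generalize 4 * K ^ 2 = k at hK4
    rw [Real.mul_rpow (by positivity) (by positivity),
      Real.mul_rpow (by positivity) (by positivity), Real.mul_rpow (by positivity) (by positivity),
      ← Real.rpow_mul (by positivity), ← Real.rpow_mul (by positivity),
      ← Real.rpow_mul (by positivity), ← Real.rpow_mul (by positivity),
      ← Real.rpow_mul (by positivity), ← Real.rpow_natCast, ← Real.rpow_mul hA]
    have e1 : 3 / (2 * α - 3) * ((2 * α - 3) / (2 * α)) = 3 / (2 * α) := by field_simp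
    have e2 : ((2 : ℕ) : ℝ) * (α / (2 * α - 3) * ((2 * α - 3) / (2 * α))) = 1 := by
      push_cast; field_simp
    have e3 : 2 * α / (α - 3) * ((α - 3) / (2 * α - 3) * ((2 * α - 3) / (2 * α))) = 1 := by
      field_simp
    have e4 : (2 * α - 6) / (2 * α - 3) * ((2 * α - 3) / (2 * α)) = 1 - 3 / α := by
      field_simp
      ring
    rw [e1, e2, e3, e4, Real.rpow_one, Real.rpow_one]
  have hGK : (K * G) ^ (3 / α) = (G ^ 2 / 4) ^ (3 / (2 * α)) * (4 * K ^ 2) ^ (3 / (2 * α)) := by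
    rw [← Real.mul_rpow (by positivity) (by positivity),
      show G ^ 2 / 4 * (4 * K ^ 2) = (K * G) ^ (2 : ℝ) by rw [Real.rpow_two]; ring,
      ← Real.rpow_mul (by positivity)]
    congr 1
    field_simp
  have hlast : y ≤ (4 * K ^ 2) ^ (3 / (2 * α - 3)) * (A ^ 2 + U ^ (2 * α / (α - 3)))
        * Z ^ ((2 * α - 6) / (2 * α - 3)) := by
    rw [hy]; gcongr
  have l1 : 3 / (2 * α) ≤ 1 := by rw [div_le_one (by linarith)]; linarith
  have l2 : (2 * α - 3) / (2 * α) ≤ 1 := by rw [div_le_one (by linarith)]; linarith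
  calc A * U * Z ^ (1 - 3 / α) * (K * G) ^ (3 / α)
      = (G ^ 2 / 4) ^ (3 / (2 * α)) * y ^ ((2 * α - 3) / (2 * α)) := by rw [hyp, hGK]; ring
    _ ≤ 3 / (2 * α) * (G ^ 2 / 4) + (2 * α - 3) / (2 * α) * y := hm
    _ ≤ 1 * (G ^ 2 / 4) + 1 * y := by gcongr
    _ ≤ _ := by linarith

/-! ### Hölder's inequality and interpolation -/

lemma lintegral_rpow_eq {F : Type*} [NormedAddCommGroup F] (f : E3 → F) {r : ℝ} (hr : 0 < r) :
    ∫⁻ x, ‖f x‖ₑ ^ r = eLpNorm f (ENNReal.ofReal r) volume ^ r := by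
  rw [eLpNorm_eq_lintegral_rpow_enorm_toReal (by simpa using hr) (by simp),
    ENNReal.toReal_ofReal hr.le, ← ENNReal.rpow_mul, one_div, inv_mul_cancel₀ hr.ne',
    ENNReal.rpow_one]

/-- Hölder's inequality with the last factor split as `h = h ^ (1 - 3 / α) * h ^ (3 / α)`, which
combines Hölder with the interpolation of `L^{2α/(α-2)}` between `L²` and `L⁶`. -/
lemma holder_step (α : ℝ) (hα : 3 < α) {F₁ F₂ F₃ : Type*} [NormedAddCommGroup F₁]
    [NormedAddCommGroup F₂] [NormedAddCommGroup F₃] {f : E3 → F₁} {g : E3 → F₂} {h : E3 → F₃}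
    (hf : AEStronglyMeasurable f volume) (hg : AEStronglyMeasurable g volume)
    (hh : AEStronglyMeasurable h volume) :
    ∫⁻ x, ‖f x‖ₑ * ‖g x‖ₑ * ‖h x‖ₑ ≤
      eLpNorm f (ENNReal.ofReal 2) volume * eLpNorm g (ENNReal.ofReal α) volume *
      eLpNorm h (ENNReal.ofReal 2) volume ^ (1 - 3 / α) *
      eLpNorm h (ENNReal.ofReal 6) volume ^ (3 / α) := by
  have p0 : 0 < α := by linarith
  have d1 : 3 / α < 1 := by rw [div_lt_one p0]; exact hα
  have d0 : 0 < 3 / α := by positivity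
  -- The exponents are those of `|f|²`, `|g|^α`, `|h|²` and `|h|⁶`; they add up to one.
  have key := ENNReal.lintegral_prod_norm_pow_le (μ := (volume : Measure E3))
    (Finset.univ : Finset (Fin 4))
    (f := ![fun x => ‖f x‖ₑ ^ (2 : ℝ), fun x => ‖g x‖ₑ ^ α, fun x => ‖h x‖ₑ ^ (2 : ℝ),
      fun x => ‖h x‖ₑ ^ (6 : ℝ)])
    (p := ![1 / 2, 1 / α, (1 - 3 / α) / 2, (3 / α) / 6])
    (by
      intro i _
      fin_cases i
      · exact hf.enorm.pow_const _
      · exact hg.enorm.pow_const _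
      · exact hh.enorm.pow_const _
      · exact hh.enorm.pow_const _)
    (by simp [Fin.sum_univ_four]; field_simp; ring)
    (by
      intro i _
      fin_cases i
      · simp
      · simpa using p0.le
      · show 0 ≤ (1 - 3 / α) / 2
        linarith
      · show 0 ≤ (3 / α) / 6
        linarith)
  simp only [Fin.prod_univ_four, Matrix.cons_val, ← ENNReal.rpow_mul] at key
  rw [lintegral_rpow_eq f two_pos, lintegral_rpow_eq g p0, lintegral_rpow_eq h two_pos,
    lintegral_rpow_eq h (by norm_num : (0 : ℝ) < 6)] at key
  simp only [← ENNReal.rpow_mul] at key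
  have e1 : (2 : ℝ) * (1 / 2) = 1 := by norm_num
  have e2 : α * (1 / α) = 1 := by field_simp
  have e3 : 2 * ((1 - 3 / α) / 2) = 1 - 3 / α := by ring
  have e4 : 6 * (3 / α / 6) = 3 / α := by ring
  simp only [e1, e2, e3, e4, ENNReal.rpow_one] at key
  refine le_trans (le_of_eq ?_) key
  refine lintegral_congr fun x => ?_
  rw [mul_assoc (_ * _) (_ ^ _) (_ ^ _),
    ← ENNReal.rpow_add_of_nonneg _ _ (by linarith) d0.le, sub_add_cancel, ENNReal.rpow_one]

/-! ### The Sobolev inequality for functions without compact support -/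

/-- The cut-off argument: the Gagliardo-Nirenberg-Sobolev inequality in the library is stated for
compactly supported functions, and it passes to `C¹` functions in `L²` by applying it to
`χ (x / (n + 1)) • f x` and letting `n → ∞`. -/
lemma sobolev_six {f : E3 → E3} (hf : ContDiff ℝ 1 f) (hf2 : eLpNorm f 2 volume ≠ ⊤) :
    eLpNorm f 6 volume ≤
      SNormLESNormFDerivOfEqConst E3 (volume : Measure E3) 2 * eLpNorm (fderiv ℝ f) 2 volume := by
  classical
  set K := SNormLESNormFDerivOfEqConst E3 (volume : Measure E3) 2
  let χ : ContDiffBump (0 : E3) := ⟨1, 2, one_pos, one_lt_two⟩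
  have hχ : ContDiff ℝ 1 (χ : E3 → ℝ) := χ.contDiff
  have hχs : HasCompactSupport (χ : E3 → ℝ) := χ.hasCompactSupport
  obtain ⟨M, hM⟩ : ∃ M, ∀ x, ‖fderiv ℝ (χ : E3 → ℝ) x‖ ≤ M :=
    (hχ.continuous_fderiv one_ne_zero).bounded_above_of_compact_support (hχs.fderiv ℝ)
  have hM0 : 0 ≤ M := (norm_nonneg _).trans (hM 0)
  let c : ℕ → ℝ := fun n => ((n : ℝ) + 1)⁻¹
  have hc : ∀ n, 0 < c n := fun n => by positivity
  have hc0 : Filter.Tendsto c Filter.atTop (nhds 0) := by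
    simpa [c, one_div] using tendsto_one_div_add_atTop_nhds_zero_nat (𝕜 := ℝ)
  let ψ : ℕ → E3 → ℝ := fun n x => χ (c n • x)
  have hψ : ∀ n, ContDiff ℝ 1 (ψ n) := fun n => hχ.comp (contDiff_const_smul _)
  have hψs : ∀ n, HasCompactSupport (ψ n) := fun n =>
    hχs.comp_homeomorph (Homeomorph.smulOfNeZero (c n) (hc n).ne')
  have hψ1 : ∀ n x, ‖ψ n x‖ ≤ 1 := fun n x => by
    rw [Real.norm_of_nonneg χ.nonneg]; exact χ.le_one
  have hψd : ∀ n x, ‖fderiv ℝ (ψ n) x‖ ≤ c n * M := fun n x => by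
    have : fderiv ℝ (ψ n) x = c n • fderiv ℝ (χ : E3 → ℝ) (c n • x) := by
      exact fderiv_comp_smul _
    rw [this, norm_smul, Real.norm_of_nonneg (hc n).le]
    gcongr
    exact hM _
  let F : ℕ → E3 → E3 := fun n x => ψ n x • f x
  have hF : ∀ n, ContDiff ℝ 1 (F n) := fun n => (hψ n).smul hf
  have hFs : ∀ n, HasCompactSupport (F n) := fun n => (hψs n).smul_right
  have hfd : Differentiable ℝ f := hf.differentiable one_ne_zero
  have hdc : Continuous (fderiv ℝ f) := hf.continuous_fderiv one_ne_zero
  have hFd : ∀ n, eLpNorm (fderiv ℝ (F n)) 2 volume ≤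
      eLpNorm (fderiv ℝ f) 2 volume + ENNReal.ofReal (c n * M) * eLpNorm f 2 volume := by
    intro n
    have hb : ∀ x, ‖fderiv ℝ (F n) x‖ ≤ ‖(‖fderiv ℝ f x‖ + (c n * M) * ‖f x‖ : ℝ)‖ := by
      intro x
      have hcM : 0 ≤ c n * M := mul_nonneg (hc n).le hM0
      rw [Real.norm_of_nonneg (by positivity)]
      have : fderiv ℝ (F n) x = ψ n x • fderiv ℝ f x + (fderiv ℝ (ψ n) x).smulRight (f x) :=
        fderiv_fun_smul ((hψ n).differentiable one_ne_zero x) (hfd x)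
      rw [this]
      refine (norm_add_le _ _).trans ?_
      rw [norm_smul, ContinuousLinearMap.norm_smulRight_apply]
      gcongr
      · exact mul_le_of_le_one_left (norm_nonneg _) (hψ1 n x)
      · exact hψd n x
    refine (eLpNorm_mono hb).trans ((eLpNorm_add_le ?_ ?_ one_le_two).trans ?_)
    · exact hdc.norm.aestronglyMeasurable
    · exact (continuous_const.mul hf.continuous.norm).aestronglyMeasurable
    · rw [eLpNorm_norm]
      gcongr
      have := eLpNorm_const_smul_le (c := c n * M) (f := fun x => ‖f x‖) (p := 2)
        (μ := (volume : Measure E3))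
      rw [eLpNorm_norm, Real.enorm_of_nonneg (mul_nonneg (hc n).le hM0)] at this
      exact this
  have hFn : ∀ n, eLpNorm (F n) 6 volume ≤
      K * (eLpNorm (fderiv ℝ f) 2 volume + ENNReal.ofReal (c n * M) * eLpNorm f 2 volume) := by
    intro n
    refine le_trans ?_ (mul_le_mul_right (hFd n) _)
    have := eLpNorm_le_eLpNorm_fderiv_of_eq (μ := (volume : Measure E3)) (hF n) (hFs n) (p := 2)
      (p' := 6) one_le_two (by simp) (by simp; norm_num)
    simpa using this
  have hlim : Filter.Tendsto
      (fun n => K * (eLpNorm (fderiv ℝ f) 2 volume + ENNReal.ofReal (c n * M) *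
        eLpNorm f 2 volume)) Filter.atTop (nhds (K * eLpNorm (fderiv ℝ f) 2 volume)) := by
    have h1 : Filter.Tendsto (fun n => ENNReal.ofReal (c n * M)) Filter.atTop (nhds 0) := by
      have := ENNReal.tendsto_ofReal (hc0.mul_const M)
      simpa using this
    have h2 := ENNReal.Tendsto.mul_const h1 (Or.inr hf2)
    have h3 := (tendsto_const_nhds (x := eLpNorm (fderiv ℝ f) 2 volume)).add h2
    have h4 := ENNReal.Tendsto.const_mul (a := (K : ENNReal)) h3 (Or.inr (by simp))
    simpa using h4
  have hpt : ∀ x, Filter.Tendsto (fun n => F n x) Filter.atTop (nhds (f x)) := by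
    intro x
    have h1 : Filter.Tendsto (fun n => c n • x) Filter.atTop (nhds 0) := by
      simpa using hc0.smul_const x
    have h2 : Filter.Tendsto (fun n => ψ n x) Filter.atTop (nhds 1) := by
      have := (χ.continuous.tendsto 0).comp h1
      rwa [χ.one_of_mem_closedBall (by simp [χ])] at this
    simpa using h2.smul_const (f x)
  calc eLpNorm f 6 volume ≤ Filter.atTop.liminf fun n => eLpNorm (F n) 6 volume :=
        Lp.eLpNorm_lim_le_liminf_eLpNorm (fun n => (hF n).continuous.aestronglyMeasurable) f
          (Filter.Eventually.of_forall hpt)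
    _ ≤ _ := Filter.liminf_le_liminf (Filter.Eventually.of_forall hFn)
    _ = _ := hlim.liminf_eq

/-! ### The pointwise Frobenius norm of the gradient -/

lemma sum_clm_sq_nonneg (L : E3 →L[ℝ] E3) : 0 ≤ ∑ i, ∑ j, (L (ee j) i) ^ 2 :=
  Finset.sum_nonneg fun _ _ => Finset.sum_nonneg fun _ _ => sq_nonneg _

/-- Cauchy-Schwarz in each row: a matrix acts with norm at most its Frobenius norm. -/
lemma norm_clm_apply_le (L : E3 →L[ℝ] E3) (v : E3) :
    ‖L v‖ ≤ Real.sqrt (∑ i, ∑ j, (L (ee j) i) ^ 2) * ‖v‖ := by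
  have hv : ∀ i, L v i = ∑ j, v j * L (ee j) i := by
    intro i
    have : v = ∑ j, v j • ee j := by
      ext k
      simp [ee, Fin.sum_univ_three]
      fin_cases k <;> simp
    conv_lhs => rw [this]
    simp
  rw [EuclideanSpace.norm_eq (L v), EuclideanSpace.norm_eq v,
    ← Real.sqrt_mul (sum_clm_sq_nonneg L)]
  refine Real.sqrt_le_sqrt ?_
  rw [Finset.sum_mul]
  refine Finset.sum_le_sum fun i _ => ?_
  simp only [Real.norm_eq_abs, sq_abs]
  rw [hv i, mul_comm (∑ j, (L (ee j) i) ^ 2)]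
  exact Finset.sum_mul_sq_le_sq_mul_sq _ _ _

lemma gradNormAt_nonneg (w : E3 → E3) (x : E3) : 0 ≤ gradNormAt w x := Real.sqrt_nonneg _

lemma norm_fderiv_le_gradNormAt (w : E3 → E3) (x : E3) : ‖fderiv ℝ w x‖ ≤ gradNormAt w x :=
  ContinuousLinearMap.opNorm_le_bound _ (gradNormAt_nonneg w x) (norm_clm_apply_le _)

lemma gradNormAt_le (w : E3 → E3) (x : E3) : gradNormAt w x ≤ 3 * ‖fderiv ℝ w x‖ := by
  refine Real.sqrt_le_iff.2 ⟨by positivity, ?_⟩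
  have : ∀ i j, (fderiv ℝ w x (ee j) i) ^ 2 ≤ ‖fderiv ℝ w x‖ ^ 2 := by
    intro i j
    rw [← sq_abs]
    gcongr
    refine (PiLp.norm_apply_le (fderiv ℝ w x (ee j)) i).trans ?_
    exact (ContinuousLinearMap.le_opNorm _ _).trans (by simp [ee])
  refine (Finset.sum_le_sum fun i _ => Finset.sum_le_sum fun j _ => this i j).trans ?_
  simp
  nlinarith

lemma continuous_gradNormAt {w : E3 → E3} (hw : Continuous (fderiv ℝ w)) :
    Continuous (gradNormAt w) := by
  unfold gradNormAt
  fun_prop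

/-- The integrand is the inner product of `u_z` with the matrix `∇b` applied to `b_z`. -/
lemma norm_integrand_le (b u : E3 → E3) (x : E3) :
    ‖∑ i, ∑ j, pdv 2 b x j * fderiv ℝ b x (ee j) i * pdv 2 u x i‖ ≤
      gradNormAt b x * ‖pdv 2 u x‖ * ‖pdv 2 b x‖ := by
  have h : ∑ i, ∑ j, pdv 2 b x j * fderiv ℝ b x (ee j) i * pdv 2 u x i =
      inner ℝ (pdv 2 u x) (fderiv ℝ b x (pdv 2 b x)) := by
    have : pdv 2 b x = ∑ j, pdv 2 b x j • ee j := by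
      ext k
      simp [ee, Fin.sum_univ_three]
      fin_cases k <;> simp
    conv_rhs => rw [this]
    simp [PiLp.inner_apply, Finset.sum_mul]
  rw [h]
  refine (norm_inner_le_norm _ _).trans ?_
  have := mul_le_mul_of_nonneg_left (norm_clm_apply_le (fderiv ℝ b x) (pdv 2 b x))
    (norm_nonneg (pdv 2 u x))
  unfold gradNormAt
  linarith

/-! ### Integrability of Schwartz fields -/

lemma schwartz_pdv {w : E3 → E3} (hw : SchwartzClassV w) (i : Fin 3) :
    SchwartzClassV (pdv i w) := by
  obtain ⟨g, rfl⟩ := hw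
  exact ⟨SchwartzMap.evalCLM ℝ E3 E3 (ee i) (SchwartzMap.fderivCLM ℝ E3 E3 g), rfl⟩

lemma schwartz_memLp {w : E3 → E3} (hw : SchwartzClassV w) (p : ENNReal) : MemLp w p volume := by
  obtain ⟨g, rfl⟩ := hw
  exact g.memLp p

lemma schwartz_contDiff {w : E3 → E3} (hw : SchwartzClassV w) : ContDiff ℝ 1 w := by
  obtain ⟨g, rfl⟩ := hw
  exact g.smooth 1

lemma schwartz_memLp_grad {w : E3 → E3} (hw : SchwartzClassV w) (p : ENNReal) :
    MemLp (gradNormAt w) p volume := by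
  have hc := (schwartz_contDiff hw).continuous_fderiv one_ne_zero
  obtain ⟨g, rfl⟩ := hw
  refine MemLp.of_le_mul (c := 3) ((SchwartzMap.fderivCLM ℝ E3 E3 g).memLp p)
    (continuous_gradNormAt hc).aestronglyMeasurable (Filter.Eventually.of_forall fun x => ?_)
  rw [Real.norm_of_nonneg (gradNormAt_nonneg _ _)]
  exact gradNormAt_le _ _

/-! ### The estimate -/

/-- **Estimate for `I₂`.** For `α > 3` and `γ = 2α/(α−3)` there is a constant `C = C(α)`
such that for all Schwartz vector fields `u, b` on `ℝ³`,
`|∫ (b_z·∇b)·u_z| ≤ (1/4)‖∇b_z‖₂² + C (‖∇b‖₂² + ‖u_z‖_α^γ) ‖b_z‖₂^{(2α−6)/(2α−3)}`. -/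
theorem stmt5 (α : ℝ) (hα : 3 < α) :
    ∃ C : ℝ, ∀ u b : E3 → E3, SchwartzClassV u → SchwartzClassV b →
      |∫ x : E3, ∑ i, ∑ j, pdv 2 b x j * fderiv ℝ b x (ee j) i * pdv 2 u x i|
        ≤ (1/4) * (LnormGrad 2 (pdv 2 b)) ^ 2
          + C * ((LnormGrad 2 b) ^ 2 + (LnormV α (pdv 2 u)) ^ (2 * α / (α - 3)))
              * (LnormV 2 (pdv 2 b)) ^ ((2 * α - 6) / (2 * α - 3)) := by
  set K : NNReal := SNormLESNormFDerivOfEqConst E3 (volume : Measure E3) 2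
  refine ⟨(4 * (K : ℝ) ^ 2) ^ (3 / (2 * α - 3)), fun u b hu hb => ?_⟩
  have hbz := schwartz_pdv hb 2
  have huz := schwartz_pdv hu 2
  have p0 : 0 < α := by linarith
  have d1 : 0 ≤ 1 - 3 / α := by
    rw [sub_nonneg, div_le_one p0]; exact hα.le
  have d0 : 0 ≤ 3 / α := by positivity
  refine le_trans ?_ (young_step α hα K.coe_nonneg (A := LnormGrad 2 b) (U := LnormV α (pdv 2 u))
    (Z := LnormV 2 (pdv 2 b)) (G := LnormGrad 2 (pdv 2 b)) ENNReal.toReal_nonneg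
    ENNReal.toReal_nonneg ENNReal.toReal_nonneg ENNReal.toReal_nonneg)
  have hA := (schwartz_memLp_grad hb (ENNReal.ofReal 2)).eLpNorm_ne_top
  have hG := (schwartz_memLp_grad hbz (ENNReal.ofReal 2)).eLpNorm_ne_top
  have hU := (schwartz_memLp huz (ENNReal.ofReal α)).eLpNorm_ne_top
  have hZ := (schwartz_memLp hbz (ENNReal.ofReal 2)).eLpNorm_ne_top
  have hS : eLpNorm (pdv 2 b) (ENNReal.ofReal 6) volume ≤
      K * eLpNorm (gradNormAt (pdv 2 b)) (ENNReal.ofReal 2) volume := by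
    have e6 : ENNReal.ofReal 6 = 6 := by norm_num
    have e2 : ENNReal.ofReal 2 = 2 := by norm_num
    rw [e6, e2]
    refine (sobolev_six (schwartz_contDiff hbz) (schwartz_memLp hbz 2).eLpNorm_ne_top).trans ?_
    refine mul_le_mul_right (eLpNorm_mono fun x => ?_) _
    rw [Real.norm_of_nonneg (gradNormAt_nonneg _ _)]
    exact norm_fderiv_le_gradNormAt _ _
  have hI : ‖∫ x : E3, ∑ i, ∑ j, pdv 2 b x j * fderiv ℝ b x (ee j) i * pdv 2 u x i‖ₑ ≤
      eLpNorm (gradNormAt b) (ENNReal.ofReal 2) volume *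
      eLpNorm (pdv 2 u) (ENNReal.ofReal α) volume *
      eLpNorm (pdv 2 b) (ENNReal.ofReal 2) volume ^ (1 - 3 / α) *
      (K * eLpNorm (gradNormAt (pdv 2 b)) (ENNReal.ofReal 2) volume) ^ (3 / α) := by
    refine (enorm_integral_le_lintegral_enorm _).trans ?_
    refine le_trans (lintegral_mono fun x => ?_) ((holder_step α hα
      (schwartz_memLp_grad hb 2).aestronglyMeasurable (schwartz_memLp huz 2).aestronglyMeasurable
      (schwartz_memLp hbz 2).aestronglyMeasurable).trans ?_)
    · rw [← enorm_norm (pdv 2 u x), ← enorm_norm (pdv 2 b x), ← enorm_mul, ← enorm_mul]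
      refine enorm_le_iff_norm_le.2 ((norm_integrand_le b u x).trans (le_of_eq ?_))
      rw [Real.norm_of_nonneg]
      have := gradNormAt_nonneg b x
      positivity
    · gcongr
  have hfin : eLpNorm (gradNormAt b) (ENNReal.ofReal 2) volume *
      eLpNorm (pdv 2 u) (ENNReal.ofReal α) volume *
      eLpNorm (pdv 2 b) (ENNReal.ofReal 2) volume ^ (1 - 3 / α) *
      (K * eLpNorm (gradNormAt (pdv 2 b)) (ENNReal.ofReal 2) volume) ^ (3 / α) ≠ ⊤ :=
    ENNReal.mul_ne_top (ENNReal.mul_ne_top (ENNReal.mul_ne_top hA hU)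
      (ENNReal.rpow_ne_top_of_nonneg d1 hZ))
      (ENNReal.rpow_ne_top_of_nonneg d0 (ENNReal.mul_ne_top ENNReal.coe_ne_top hG))
  have h := ENNReal.toReal_mono hfin hI
  simp only [ENNReal.toReal_mul, ← ENNReal.toReal_rpow, ENNReal.coe_toReal, toReal_enorm] at h
  exact h
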